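/- Let (A,B) be an invertible Jones pair of n×n complex matrices with A symmetric, let H ∈ N_{A,B}, and let K be an n×n matrix. Then K is paired with H if and only if Kᵀ is paired with Hᵀ (note Hᵀ ∈ N_{A,B} since A is symmetric). Moreover, if K is paired with H, then H∘A ∈ N_A, Kᵀ∘A ∈ N_{Bᵀ}, and Θ_A(H∘A) = Θ_{Bᵀ}(Kᵀ∘A). -/

import Mathlib

open Matrix

variable {m : Type*} [Fintype m] [DecidableEq m]

/-- The Schur (entrywise) inverse `A^(-)` of a matrix: `(A^(-))_{ij} = (A_{ij})⁻¹`. -/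
noncomputable def sinv (A : Matrix m m ℂ) : Matrix m m ℂ := Matrix.of fun i j => (A i j)⁻¹

/-- A type-II matrix: a Schur invertible matrix `W` with `W * (W^(-))ᵀ = n • I`,
where `n` is the size of the matrix. -/
def IsTypeII (A : Matrix m m ℂ) : Prop :=
  (∀ i j, A i j ≠ 0) ∧ A * (sinv A)ᵀ = (Fintype.card m : ℂ) • (1 : Matrix m m ℂ)

/-- `v_{ij} = (A e_i) ∘ (B e_j)`: the entrywise product of column `i` of `A`
with column `j` of `B`. -/
def colProd (A B : Matrix m m ℂ) (i j : m) : m → ℂ := fun k => A k i * B k j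

/-- Membership in the Nomura algebra `N_{A,B}`: every `v_{ij}` is an eigenvector of `M`. -/
def InNomura (A B M : Matrix m m ℂ) : Prop :=
  ∀ i j, ∃ c : ℂ, M.mulVec (colProd A B i j) = c • colProd A B i j

/-- `S = Θ_{A,B}(M)`: the matrix of eigenvalues, i.e. `M v_{ij} = S_{ij} v_{ij}` for all `i,j`. -/
def IsTheta (A B M S : Matrix m m ℂ) : Prop :=
  ∀ i j, M.mulVec (colProd A B i j) = S i j • colProd A B i j

/-- `(A,B)` is a Jones pair: `A` invertible, `B` Schur invertible, and
`X_A Δ_B X_A = Δ_B X_A Δ_B` and `X_A Δ_{Bᵀ} X_A = Δ_{Bᵀ} X_A Δ_{Bᵀ}`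
as operators on matrices. -/
def IsJonesPair (A B : Matrix m m ℂ) : Prop :=
  IsUnit A ∧ (∀ i j, B i j ≠ 0) ∧
  (∀ M : Matrix m m ℂ, A * (B ⊙ (A * M)) = B ⊙ (A * (B ⊙ M))) ∧
  (∀ M : Matrix m m ℂ, A * (Bᵀ ⊙ (A * M)) = Bᵀ ⊙ (A * (Bᵀ ⊙ M)))

/-- An invertible Jones pair: a Jones pair in which moreover `A` is Schur
invertible and `B` is invertible. -/
def IsInvertibleJonesPair (A B : Matrix m m ℂ) : Prop :=
  IsJonesPair A B ∧ (∀ i j, A i j ≠ 0) ∧ IsUnit B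

/-- `W` is a spin model: for some `d` with `d² = n`, `(d⁻¹ W, W^(-))` is an
invertible Jones pair. -/
def IsSpinModel (W : Matrix m m ℂ) : Prop :=
  ∃ d : ℂ, d ^ 2 = (Fintype.card m : ℂ) ∧ IsInvertibleJonesPair (d⁻¹ • W) (sinv W)

/-- Given an invertible Jones pair `(A,B)` with `A` symmetric, `K` is paired with
`H ∈ N_{A,B}` if `Kᵀ ∈ N_{A,Bᵀ}` and `Θ_{A,B}(H) = (Θ_{A,Bᵀ}(Kᵀ))ᵀ`. -/
def Paired (A B H K : Matrix m m ℂ) : Prop :=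
  ∃ S : Matrix m m ℂ, IsTheta A B H S ∧ IsTheta A Bᵀ Kᵀ Sᵀ

/-- The `4n × 4n` matrix with `4 × 4` block structure
`[[P, Q, R, R], [Q, P, R, R], [S, S, T, U], [S, S, U, T]]`. -/
def blockMat {n : ℕ} (P Q R S T U : Matrix (Fin n) (Fin n) ℂ) :
    Matrix (Fin 4 × Fin n) (Fin 4 × Fin n) ℂ :=
  Matrix.of fun x y =>
    (![![P, Q, R, R], ![Q, P, R, R], ![S, S, T, U], ![S, S, U, T]] x.1 y.1) x.2 y.2

/-- Yamada's `4n × 4n` matrix `V` built from `A`, `B` and `d` with `d² = n`. -/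
noncomputable def Vmat {n : ℕ} (A B : Matrix (Fin n) (Fin n) ℂ) (d : ℂ) :
    Matrix (Fin 4 × Fin n) (Fin 4 × Fin n) ℂ :=
  blockMat (d • A) (-(d • A)) (sinv B) (sinv B)ᵀ (d • A) (-(d • A))

/-!
Two matrix forms of `Θ_{P,Q}(M) = S` drive the argument: column by column it says that `M` is
diagonalized by `diag(Q e_j) P` for every `j`, and row by row that
`Pᵀ diag(M_x) Q = diag(P_x) S diag(Q_x)` for every `x`. The first form gives closure under
transposition. The second gives a composition rule for type-II `Q`, because `Q (Q^(-))ᵀ = n I`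
collapses the product of the row forms of `(P,Q)` and `(Q^(-),R)`: if `Θ_{P,Q}(F) = S` and
`Θ_{Q^(-),R}(G) = U`, then `Θ_{P,R}(F ∘ G) = n⁻¹ S U`.

A Jones pair satisfies `Θ_{A,B}(A) = B` and `Θ_{A,Bᵀ}(A) = Bᵀ`, and both `A` and `B` are type II
when `B` is invertible. For symmetric `A`, composing with `A` and with `A^(-)` then shows that `K`
is paired with `H` if and only if `H ∘ A` and `Kᵀ ∘ A` have a common image under `Θ_A` and
`Θ_{Bᵀ}`. This condition is invariant under transposing both `H` and `K`, since
`(H ∘ A)ᵀ = Hᵀ ∘ A` and likewise for `Kᵀ`.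
-/

section SchurInverse

variable (A M : Matrix m m ℂ)

omit [Fintype m] [DecidableEq m]

theorem sinv_sinv : sinv (sinv A) = A := by
  ext i j
  simp [sinv]

theorem transpose_sinv : (sinv A)ᵀ = sinv Aᵀ := rfl

variable {A}

theorem hadamard_hadamard_sinv_cancel (hA : ∀ i j, A i j ≠ 0) : M ⊙ A ⊙ sinv A = M := by
  ext i j
  simp [sinv, hA i j]

end SchurInverse

theorem sinv_diagonal_mul (A : Matrix m m ℂ) (d : m → ℂ) :
    sinv (diagonal d * A) = diagonal d⁻¹ * sinv A := by
  ext i j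
  simp [sinv, mul_comm]

namespace IsTypeII

variable {A : Matrix m m ℂ}

theorem isTypeII_sinv (hA : IsTypeII A) : IsTypeII (sinv A) := by
  refine ⟨fun i j => inv_ne_zero (hA.1 i j), ?_⟩
  simpa [sinv_sinv] using congrArg transpose hA.2

theorem isUnit (hA : IsTypeII A) : IsUnit A := by
  cases isEmpty_or_nonempty m
  · exact isUnit_of_subsingleton A
  · refine IsUnit.of_mul_eq_one ((Fintype.card m : ℂ)⁻¹ • (sinv A)ᵀ) ?_
    rw [mul_smul_comm, hA.2, inv_smul_smul₀ (Nat.cast_ne_zero.2 Fintype.card_ne_zero)]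

theorem transpose_sinv_eq_card_smul_inv (hA : IsTypeII A) :
    (sinv A)ᵀ = (Fintype.card m : ℂ) • A⁻¹ := by
  have hdet : IsUnit A.det := (isUnit_iff_isUnit_det A).1 hA.isUnit
  rw [← nonsing_inv_mul_cancel_left A (sinv A)ᵀ hdet, hA.2, mul_smul_comm, mul_one]

theorem diagonal_mul (hA : IsTypeII A) {d : m → ℂ} (hd : ∀ k, d k ≠ 0) :
    IsTypeII (diagonal d * A) := by
  refine ⟨fun i j => by simpa using ⟨hd i, hA.1 i j⟩, ?_⟩
  calc diagonal d * A * (sinv (diagonal d * A))ᵀ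
      = diagonal d * (A * (sinv A)ᵀ) * diagonal d⁻¹ := by
        simp only [sinv_diagonal_mul, transpose_mul, diagonal_transpose, mul_assoc]
    _ = (Fintype.card m : ℂ) • diagonal (d * d⁻¹) := by
        simp only [hA.2, mul_smul_comm, smul_mul_assoc, mul_one, diagonal_mul_diagonal]
        rfl
    _ = (Fintype.card m : ℂ) • 1 := by
        rw [show d * d⁻¹ = 1 from funext fun k => mul_inv_cancel₀ (hd k), diagonal_one']

theorem transpose_mul_sinv_of_mul_eq {X M : Matrix m m ℂ} (hX : IsTypeII X) {e : m → ℂ}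
    (h : M * X = X * diagonal e) : Mᵀ * sinv X = sinv X * diagonal e := by
  have hdet : IsUnit X.det := (isUnit_iff_isUnit_det X).1 hX.isUnit
  have h_inv : X⁻¹ * M = diagonal e * X⁻¹ := by
    calc X⁻¹ * M = X⁻¹ * (M * X) * X⁻¹ := by
          rw [← mul_assoc, mul_nonsing_inv_cancel_right _ _ hdet]
      _ = diagonal e * X⁻¹ := by rw [h, nonsing_inv_mul_cancel_left _ _ hdet]
  apply transpose_injective
  simp only [transpose_mul, transpose_transpose, diagonal_transpose,
    hX.transpose_sinv_eq_card_smul_inv, smul_mul_assoc, mul_smul_comm, h_inv]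

end IsTypeII

section Theta

variable {P Q R M F G S U : Matrix m m ℂ}

section

omit [DecidableEq m]

theorem isTheta_iff_forall_sum : IsTheta P Q M S ↔
    ∀ i j x, ∑ k, M x k * (P k i * Q k j) = S i j * (P x i * Q x j) := by
  simp [IsTheta, funext_iff, mulVec, dotProduct, colProd]

theorem IsTheta.inNomura (h : IsTheta P Q M S) : InNomura P Q M :=
  fun i j => ⟨S i j, h i j⟩

theorem IsTheta.swap (h : IsTheta P Q M S) : IsTheta Q P M Sᵀ := by
  intro i j
  have hcol : colProd Q P i j = colProd P Q j i := funext fun k => mul_comm _ _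
  simpa [hcol] using h j i

theorem IsTheta.smul (h : IsTheta P Q M S) (c : ℂ) : IsTheta P Q (c • M) (c • S) := by
  intro i j
  rw [smul_mulVec, h i j, Matrix.smul_apply, smul_assoc]

end

theorem isTheta_iff_forall_col : IsTheta P Q M S ↔
    ∀ j, M * (diagonal (Qᵀ j) * P) = diagonal (Qᵀ j) * P * diagonal (Sᵀ j) := by
  simp only [isTheta_iff_forall_sum, ← ext_iff]
  simp only [mul_apply (M := M), diagonal_mul, mul_diagonal, transpose_apply]
  constructor
  · intro h j x i
    simpa [mul_comm, mul_left_comm, mul_assoc] using h i j x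
  · intro h i j x
    simpa [mul_comm, mul_left_comm, mul_assoc] using h j x i

theorem isTheta_iff_forall_row : IsTheta P Q M S ↔
    ∀ x, Pᵀ * diagonal (M x) * Q = diagonal (P x) * S * diagonal (Q x) := by
  simp only [isTheta_iff_forall_sum, ← ext_iff]
  simp only [mul_apply (M := Pᵀ * _), diagonal_mul, mul_diagonal, transpose_apply]
  constructor
  · intro h x i j
    simpa [mul_comm, mul_left_comm, mul_assoc] using h i j x
  · intro h i j x
    simpa [mul_comm, mul_left_comm, mul_assoc] using h x i j

namespace IsTheta

theorem inv (h : IsTheta P Q M S) (hM : IsUnit M) (hS : ∀ i j, S i j ≠ 0) :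
    IsTheta P Q M⁻¹ (sinv S) := by
  intro i j
  have hdet : IsUnit M.det := (isUnit_iff_isUnit_det M).1 hM
  calc M⁻¹ *ᵥ colProd P Q i j
      = M⁻¹ *ᵥ ((S i j)⁻¹ • M *ᵥ colProd P Q i j) := by rw [h i j, inv_smul_smul₀ (hS i j)]
    _ = sinv S i j • colProd P Q i j := by
        rw [mulVec_smul, mulVec_mulVec, nonsing_inv_mul _ hdet, one_mulVec]
        rfl

theorem transpose (h : IsTheta P Q M S) (hP : IsTypeII P) (hQ : ∀ i j, Q i j ≠ 0) :
    IsTheta (sinv P) (sinv Q) Mᵀ S := by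
  rw [isTheta_iff_forall_col] at h ⊢
  intro j
  have hX : IsTypeII (diagonal (Qᵀ j) * P) := hP.diagonal_mul fun k => hQ k j
  have hcol := hX.transpose_mul_sinv_of_mul_eq (h j)
  rwa [sinv_diagonal_mul] at hcol

theorem transpose_self (h : IsTheta P (sinv P) M S) (hP : IsTypeII P) :
    IsTheta P (sinv P) Mᵀ Sᵀ := by
  simpa [sinv_sinv] using (h.transpose hP hP.isTypeII_sinv.1).swap

theorem hadamard (hQ : IsTypeII Q) (hF : IsTheta P Q F S) (hG : IsTheta (sinv Q) R G U) :
    IsTheta P R (F ⊙ G) ((Fintype.card m : ℂ)⁻¹ • (S * U)) := by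
  rw [isTheta_iff_forall_row] at *
  intro x
  have : Nonempty m := ⟨x⟩
  have hcard : (Fintype.card m : ℂ) ≠ 0 := Nat.cast_ne_zero.2 Fintype.card_ne_zero
  have hQx : diagonal (Q x) * diagonal (sinv Q x) = 1 := by
    rw [diagonal_mul_diagonal, ← diagonal_one]
    exact congrArg diagonal (funext fun l => mul_inv_cancel₀ (hQ.1 x l))
  have hprod : (Fintype.card m : ℂ) • (Pᵀ * diagonal ((F ⊙ G) x) * R) =
      diagonal (P x) * (S * U) * diagonal (R x) := by
    calc (Fintype.card m : ℂ) • (Pᵀ * diagonal ((F ⊙ G) x) * R)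
        = Pᵀ * diagonal (F x) * (Q * (sinv Q)ᵀ) * diagonal (G x) * R := by
          have hFG : diagonal ((F ⊙ G) x) = diagonal (F x) * diagonal (G x) := by
            rw [diagonal_mul_diagonal]
            rfl
          simp only [hQ.2, hFG, mul_smul_comm, smul_mul_assoc, mul_one, mul_assoc]
      _ = (Pᵀ * diagonal (F x) * Q) * ((sinv Q)ᵀ * diagonal (G x) * R) := by
          simp only [mul_assoc]
      _ = diagonal (P x) * S * (diagonal (Q x) * diagonal (sinv Q x)) * U * diagonal (R x) := by
          simp only [hF x, hG x, mul_assoc]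
      _ = diagonal (P x) * (S * U) * diagonal (R x) := by
          simp only [hQx, mul_one, mul_assoc]
  rw [mul_smul_comm, smul_mul_assoc, ← hprod, inv_smul_smul₀ hcard]

end IsTheta

end Theta

omit [DecidableEq m] in
theorem card_mul_mul_eq_one_of_mul_sum {R : Type*} [CommSemiring R] {a b : m → R}
    (ha : ∀ x, a x * ∑ k, b k = 1) (hb : ∀ k, (∑ x, a x) * b k = 1) (x k : m) :
    (Fintype.card m : R) * (a x * b k) = 1 := by
  have hcard : (Fintype.card m : R) = (∑ x, a x) * ∑ k, b k := by
    simp [Finset.sum_mul, ha]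
  calc (Fintype.card m : R) * (a x * b k)
      = (a x * ∑ k, b k) * ((∑ x, a x) * b k) := by rw [hcard]; ring
    _ = 1 := by rw [ha, hb, one_mul]

theorem isTypeII_of_card_mul_mul_inv_eq_one {A : Matrix m m ℂ} (hA : IsUnit A)
    (h : ∀ x k, (Fintype.card m : ℂ) * (A x k * A⁻¹ k x) = 1) : IsTypeII A := by
  have hA0 (x k : m) : A x k ≠ 0 := fun h0 => by simpa [h0] using h x k
  have hsinv : (sinv A)ᵀ = (Fintype.card m : ℂ) • A⁻¹ := by
    ext k x
    exact inv_eq_of_mul_eq_one_right (by simpa [mul_left_comm] using h x k)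
  refine ⟨hA0, ?_⟩
  rw [hsinv, mul_smul_comm, mul_nonsing_inv _ ((isUnit_iff_isUnit_det A).1 hA)]

namespace IsJonesPair

variable {A B : Matrix m m ℂ}

theorem transpose_right (h : IsJonesPair A B) : IsJonesPair A Bᵀ :=
  ⟨h.1, fun i j => h.2.1 j i, h.2.2.2, h.2.2.1⟩

theorem isTheta (h : IsJonesPair A B) : IsTheta A B A B := by
  rw [isTheta_iff_forall_sum]
  intro i j x
  have hB : B ⊙ single i j 1 = single i j (B i j) := by
    ext a b
    simp +contextual [single_apply]
  have hbraid := congrFun (congrFun (h.2.2.1 (single i j 1)) x) j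
  rw [hB] at hbraid
  simpa [mul_apply (M := A) (N := B ⊙ _), mul_comm, mul_left_comm] using hbraid

theorem hadamard_transpose_inv_mul (h : IsJonesPair A B) :
    (A ⊙ A⁻¹ᵀ) * B = vecMulVec A.diag 1 := by
  have hdet : IsUnit A.det := (isUnit_iff_isUnit_det A).1 h.1
  ext x j
  have hbraid : A * diagonal (Bᵀ j) = diagonal (Bᵀ j) * (A * diagonal (Bᵀ j) * A⁻¹) := by
    rw [← mul_assoc, ← mul_assoc, ← isTheta_iff_forall_col.1 h.isTheta j, ← mul_assoc,
      mul_nonsing_inv_cancel_right _ _ hdet]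
  have hentry := congrFun (congrFun hbraid x) x
  rw [mul_diagonal, diagonal_mul, mul_apply, transpose_apply, mul_comm] at hentry
  simp only [mul_diagonal, transpose_apply] at hentry
  simpa [mul_apply, vecMulVec_apply, mul_right_comm] using
    (mul_left_cancel₀ (h.2.1 x j) hentry).symm

/-- `A ∘ (A⁻¹)ᵀ` has rank one because `B` is invertible, and all its row and column sums are `1`. -/
theorem card_mul_mul_inv_eq_one (h : IsJonesPair A B) (hB : IsUnit B) (x k : m) :
    (Fintype.card m : ℂ) * (A x k * A⁻¹ k x) = 1 := by
  have hAdet : IsUnit A.det := (isUnit_iff_isUnit_det A).1 h.1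
  have hBdet : IsUnit B.det := (isUnit_iff_isUnit_det B).1 hB
  set b : m → ℂ := 1 ᵥ* B⁻¹
  have hrank : A ⊙ A⁻¹ᵀ = vecMulVec A.diag b := by
    rw [← vecMulVec_mul, ← h.hadamard_transpose_inv_mul, mul_nonsing_inv_cancel_right _ _ hBdet]
  have hentry (x k : m) : A x k * A⁻¹ k x = A x x * b k := congrFun (congrFun hrank x) k
  rw [hentry]
  refine card_mul_mul_eq_one_of_mul_sum (a := A.diag) (fun x => ?_) (fun k => ?_) x k
  · simp only [Finset.mul_sum, diag_apply, ← hentry]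
    rw [← mul_apply, mul_nonsing_inv _ hAdet, one_apply_eq]
  · simp only [Finset.sum_mul, diag_apply, ← hentry, mul_comm (A _ _)]
    rw [← mul_apply, nonsing_inv_mul _ hAdet, one_apply_eq]

theorem isTypeII_left (h : IsJonesPair A B) (hB : IsUnit B) : IsTypeII A :=
  isTypeII_of_card_mul_mul_inv_eq_one h.1 (h.card_mul_mul_inv_eq_one hB)

theorem sum_col_eq (h : IsJonesPair A B) (hB : IsUnit B) (x j : m) :
    ∑ k, B k j = (Fintype.card m : ℂ) * A x x := by
  have hdiag : ∑ k, A x k * A⁻¹ k x * B k j = A x x := by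
    simpa [mul_apply, vecMulVec_apply] using congrFun (congrFun h.hadamard_transpose_inv_mul x) j
  rw [← hdiag, Finset.mul_sum]
  exact Finset.sum_congr rfl fun k _ => by
    rw [← mul_assoc, h.card_mul_mul_inv_eq_one hB, one_mul]

theorem isTypeII_right (h : IsJonesPair A B) (hB : IsUnit B) : IsTypeII B := by
  have hdet : IsUnit A.det := (isUnit_iff_isUnit_det A).1 h.1
  have hrow (x y : m) : ∑ l, B y l = Fintype.card m * A x x :=
    h.transpose_right.sum_col_eq ((isUnit_transpose B).2 hB) x y
  have hinv := isTheta_iff_forall_sum.1 (h.isTheta.inv h.1 h.2.1)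
  refine ⟨h.2.1, ?_⟩
  ext x i
  rcases eq_or_ne x i with rfl | hxi
  · simp [mul_apply, sinv, h.2.1]
  have hsum : A x i * (B * (sinv B)ᵀ) x i = 0 := by
    calc A x i * (B * (sinv B)ᵀ) x i
        = ∑ l, sinv B i l * (A x i * B x l) := by
          simp [mul_apply, Finset.mul_sum, mul_comm, mul_left_comm]
      _ = ∑ y, A⁻¹ x y * A y i * ∑ l, B y l := by
          simp only [← hinv, Finset.mul_sum, mul_assoc]
          exact Finset.sum_comm
      _ = (A⁻¹ * A) x i * (Fintype.card m * A x x) := by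
          simp only [hrow x, ← Finset.sum_mul, mul_apply]
      _ = 0 := by rw [nonsing_inv_mul _ hdet, one_apply_ne hxi, zero_mul]
  simpa [hxi] using (mul_eq_zero.1 hsum).resolve_left ((h.isTypeII_left hB).1 x i)

theorem isTheta_sinv (h : IsJonesPair A B) (hB : IsUnit B) (hA : A.IsSymm) :
    IsTheta A B (sinv A) ((Fintype.card m : ℂ) • sinv B) := by
  have hsinv : sinv A = (Fintype.card m : ℂ) • A⁻¹ := by
    rw [← (h.isTypeII_left hB).transpose_sinv_eq_card_smul_inv, transpose_sinv, hA]
  rw [hsinv]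
  exact (h.isTheta.inv h.1 h.2.1).smul _

theorem isTheta_sinv_sinv (h : IsJonesPair A B) (hB : IsUnit B) (hA : A.IsSymm) :
    IsTheta (sinv A) (sinv B) A B := by
  simpa only [hA.eq] using h.isTheta.transpose (h.isTypeII_left hB) h.2.1

variable {H K : Matrix m m ℂ}

theorem paired_iff (h : IsJonesPair A B) (hB : IsUnit B) (hA : A.IsSymm) :
    Paired A B H K ↔ ∃ T : Matrix m m ℂ,
      IsTheta A (sinv A) (H ⊙ A) T ∧ IsTheta Bᵀ (sinv Bᵀ) (Kᵀ ⊙ A) T := by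
  have hBt : IsUnit Bᵀ := (isUnit_transpose B).2 hB
  have hA₂ : IsTypeII A := h.isTypeII_left hB
  have hB₂ : IsTypeII B := h.isTypeII_right hB
  have hBt₂ : IsTypeII Bᵀ := h.transpose_right.isTypeII_right hBt
  constructor
  · rintro ⟨S, hH, hK⟩
    exact ⟨_, .hadamard hB₂ hH (h.isTheta_sinv_sinv hB hA).swap,
      .hadamard hA₂ hK.swap (h.transpose_right.isTheta_sinv_sinv hBt hA)⟩
  · rintro ⟨T, hH, hK⟩
    have hAinv : IsTheta (sinv (sinv A)) B (sinv A) ((Fintype.card m : ℂ) • sinv B) := by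
      rw [sinv_sinv]
      exact h.isTheta_sinv hB hA
    have hAinv' : IsTheta (sinv (sinv Bᵀ)) A (sinv A) ((Fintype.card m : ℂ) • sinv B) := by
      rw [sinv_sinv]
      exact (h.transpose_right.isTheta_sinv hBt hA).swap
    have hH' := IsTheta.hadamard hA₂.isTypeII_sinv hH hAinv
    have hK' := IsTheta.hadamard hBt₂.isTypeII_sinv hK hAinv'
    rw [hadamard_hadamard_sinv_cancel _ hA₂.1] at hH' hK'
    exact ⟨_, hH', hK'.swap⟩

theorem paired_transpose (h : IsJonesPair A B) (hB : IsUnit B) (hA : A.IsSymm)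
    (hHK : Paired A B H K) : Paired A B Hᵀ Kᵀ := by
  have htr (M : Matrix m m ℂ) : (M ⊙ A)ᵀ = Mᵀ ⊙ A := by rw [transpose_hadamard, hA]
  obtain ⟨T, hH, hK⟩ := (h.paired_iff hB hA).1 hHK
  have hH' := hH.transpose_self (h.isTypeII_left hB)
  have hK' := hK.transpose_self (h.transpose_right.isTypeII_right ((isUnit_transpose B).2 hB))
  rw [htr] at hH' hK'
  exact (h.paired_iff hB hA).2 ⟨Tᵀ, hH', hK'⟩

end IsJonesPair

theorem paired_transpose_and_theta_general {A B H K : Matrix m m ℂ}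
    (h : IsJonesPair A B) (hB : IsUnit B) (hA : A.IsSymm) :
    (Paired A B H K ↔ Paired A B Hᵀ Kᵀ) ∧
    (Paired A B H K →
      InNomura A (sinv A) (H ⊙ A) ∧
      InNomura Bᵀ (sinv Bᵀ) (Kᵀ ⊙ A) ∧
      ∃ S : Matrix m m ℂ,
        IsTheta A (sinv A) (H ⊙ A) S ∧ IsTheta Bᵀ (sinv Bᵀ) (Kᵀ ⊙ A) S) := by
  refine ⟨⟨h.paired_transpose hB hA, fun hHK => ?_⟩, fun hHK => ?_⟩
  · simpa using h.paired_transpose hB hA hHK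
  · obtain ⟨T, hH, hK⟩ := (h.paired_iff hB hA).1 hHK
    exact ⟨hH.inNomura, hK.inNomura, T, hH, hK⟩

theorem paired_transpose_and_theta {n : ℕ} (hn : 0 < n)
    (A B H K : Matrix (Fin n) (Fin n) ℂ)
    (h : IsInvertibleJonesPair A B) (hAs : Aᵀ = A) (hH : InNomura A B H) :
    (Paired A B H K ↔ Paired A B Hᵀ Kᵀ) ∧
    (Paired A B H K →
      InNomura A (sinv A) (H ⊙ A) ∧
      InNomura Bᵀ (sinv Bᵀ) (Kᵀ ⊙ A) ∧
      ∃ S : Matrix (Fin n) (Fin n) ℂ,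
        IsTheta A (sinv A) (H ⊙ A) S ∧ IsTheta Bᵀ (sinv Bᵀ) (Kᵀ ⊙ A) S) :=
  paired_transpose_and_theta_general h.1 h.2.2 hAs
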